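/- For all real a > 0 and b > 0, ∫₀^∞ w^{−1/2} · exp(−a/w − b·w) dw = √(π/b) · exp(−2√(a·b)). -/

import Mathlib

open MeasureTheory Real

/-- For `a, b > 0`, `∫₀^∞ w^{−1/2} exp(−a/w − b·w) dw = √(π/b) · exp(−2√(ab))`. -/
theorem integral_rpow_neg_half_exp_sub
    (a b : ℝ) (ha : 0 < a) (hb : 0 < b) :
    ∫ w in Set.Ioi (0 : ℝ), w ^ (-(1 / 2) : ℝ) * Real.exp (-(a / w) - b * w)
      = Real.sqrt (Real.pi / b) * Real.exp (-2 * Real.sqrt (a * b)) := by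
  obtain ⟨c, hc, rfl⟩ : ∃ c : ℝ, 0 < c ∧ a = c ^ 2 :=
    ⟨√a, Real.sqrt_pos.2 ha, (Real.sq_sqrt ha.le).symm⟩
  obtain ⟨d, hd, rfl⟩ : ∃ d : ℝ, 0 < d ∧ b = d ^ 2 :=
    ⟨√b, Real.sqrt_pos.2 hb, (Real.sq_sqrt hb.le).symm⟩
  have hcd : 0 < c * d := mul_pos hc hd
  set s : ℝ → ℝ := fun u => √(u ^ 2 + 4 * (c * d)) with hs
  have hs2 : ∀ u, s u ^ 2 = u ^ 2 + 4 * (c * d) := fun u => Real.sq_sqrt (by positivity)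
  have hs0 : ∀ u, 0 < s u := fun u => Real.sqrt_pos.2 (by positivity)
  have hsu : ∀ u, |u| < s u := fun u => by
    refine abs_lt_of_sq_lt_sq ?_ (hs0 u).le
    rw [hs2]; linarith
  set t : ℝ → ℝ := fun u => (u + s u) / (2 * d) with ht
  have ht0 : ∀ u, 0 < t u := fun u => by
    have := (abs_lt.1 (hsu u)).1
    apply div_pos _ (by positivity)
    linarith
  have hq : ∀ u, d * t u ^ 2 - u * t u - c = 0 := fun u => by
    have := hs2 u
    simp only [ht]
    field_simp
    linear_combination this
  have hu : ∀ u, d * t u - c / t u = u := fun u => by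
    have := hq u
    have h1 := (ht0 u).ne'
    field_simp
    linear_combination this
  have hds : ∀ u, HasDerivAt s (u / s u) u := fun u => by
    have h := ((((hasDerivAt_id' u).fun_pow 2).add_const (4 * (c * d))).sqrt
      (by positivity))
    refine h.congr_deriv ?_
    change _ / (2 * s u) = _
    have h1 := (hs0 u).ne'
    field_simp
    norm_num
  have hdt : ∀ u, HasDerivAt t ((1 + u / s u) / (2 * d)) u := fun u =>
    ((hasDerivAt_id u).add (hds u)).div_const _
  have hpos : ∀ u, 0 < 1 + u / s u := fun u => by
    have := (abs_lt.1 (hsu u)).1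
    have : 1 + u / s u = (s u + u) / s u := by
      have := (hs0 u).ne'
      field_simp
    rw [this]
    exact div_pos (by linarith) (hs0 u)
  have hdphi : ∀ u, HasDerivAt (fun u => t u ^ 2) (2 * t u * ((1 + u / s u) / (2 * d))) u :=
    fun u => by
      refine ((hdt u).fun_pow 2).congr_deriv ?_
      norm_num
  have hinj : Function.Injective (fun u => t u ^ 2) := fun u v h => by
    have h1 : t u = t v := (pow_left_inj₀ (ht0 u).le (ht0 v).le two_ne_zero).1 h
    rw [← hu u, ← hu v, h1]
  have himg : (fun u => t u ^ 2) '' Set.univ = Set.Ioi 0 := by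
    ext w
    simp only [Set.image_univ, Set.mem_range, Set.mem_Ioi]
    constructor
    · rintro ⟨u, rfl⟩
      exact pow_pos (ht0 u) 2
    · intro hw
      obtain ⟨x, hx, rfl⟩ : ∃ x : ℝ, 0 < x ∧ w = x ^ 2 :=
        ⟨√w, Real.sqrt_pos.2 hw, (Real.sq_sqrt hw.le).symm⟩
      refine ⟨d * x - c / x, ?_⟩
      have h1 : s (d * x - c / x) = d * x + c / x := by
        simp only [hs]
        rw [Real.sqrt_eq_iff_mul_self_eq (by positivity) (by positivity)]
        field_simp
        ring
      simp only [ht, h1]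
      field_simp
      ring
  rw [← himg, integral_image_eq_integral_abs_deriv_smul MeasurableSet.univ
    (fun u _ => (hdphi u).hasDerivWithinAt) hinj.injOn, Measure.restrict_univ]
  have hsq : √(c ^ 2 * d ^ 2) = c * d := by
    rw [← mul_pow, Real.sqrt_sq hcd.le]
  have hint : ∀ u, |2 * t u * ((1 + u / s u) / (2 * d))| • ((t u ^ 2) ^ (-(1 / 2) : ℝ)
      * Real.exp (-(c ^ 2 / t u ^ 2) - d ^ 2 * t u ^ 2))
      = Real.exp (-2 * (c * d)) / d *
        (Real.exp (-1 * u ^ 2) + u / s u * Real.exp (-1 * u ^ 2)) := fun u => by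
    have h0 := ht0 u
    have h1 : 0 < 2 * t u * ((1 + u / s u) / (2 * d)) := by
      have := hpos u
      positivity
    have h2 : (t u ^ 2) ^ (-(1 / 2) : ℝ) = (t u)⁻¹ := by
      rw [Real.rpow_neg (by positivity), ← Real.sqrt_eq_rpow, Real.sqrt_sq h0.le]
    have h3 : -(c ^ 2 / t u ^ 2) - d ^ 2 * t u ^ 2 = -2 * (c * d) + -1 * u ^ 2 := by
      have : u ^ 2 = (d * t u - c / t u) ^ 2 := by rw [hu]
      rw [this]
      field_simp
      ring
    rw [abs_of_pos h1, h2, h3, Real.exp_add, smul_eq_mul]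
    field_simp
  have hg : Integrable (fun u : ℝ => Real.exp (-1 * u ^ 2)) := integrable_exp_neg_mul_sq one_pos
  have hsc : Continuous s := by fun_prop
  have hodd : Integrable (fun u : ℝ => u / s u * Real.exp (-1 * u ^ 2)) := by
    refine hg.mono' ?_ ?_
    · exact ((continuous_id.div hsc fun u => (hs0 u).ne').mul
        (by fun_prop)).aestronglyMeasurable
    · refine Filter.Eventually.of_forall fun u => ?_
      rw [norm_mul, Real.norm_eq_abs, Real.norm_eq_abs, Real.abs_exp, abs_div, abs_of_pos (hs0 u)]
      exact mul_le_of_le_one_left (Real.exp_pos _).le ((div_le_one (hs0 u)).2 (hsu u).le)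
  have hz : ∫ u : ℝ, u / s u * Real.exp (-1 * u ^ 2) = 0 := by
    have h := integral_neg_eq_self (fun u : ℝ => u / s u * Real.exp (-1 * u ^ 2)) volume
    have h' : ∀ u : ℝ, -u / s (-u) * Real.exp (-1 * (-u) ^ 2)
        = -(u / s u * Real.exp (-1 * u ^ 2)) := fun u => by
      simp only [hs, neg_sq]
      ring
    simp only [h', integral_neg] at h
    linarith
  simp only [hint]
  rw [integral_const_mul, integral_add hg hodd, hz, integral_gaussian, hsq,
    div_one,
    Real.sqrt_div Real.pi_pos.le, Real.sqrt_sq hd.le]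
  ring
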